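/- arXiv:2408.11034 — 2 statements merged into one kernel-verified Lean document; each statement's English description precedes it below -/
import Mathlib

section
/- Let V' = (v'_1, v'_2, v'_3, v'_4) be a sequence of unit vectors in ℝ² such that (1) 0 = arg(v'_1) ≤ arg(v'_2) ≤ arg(v'_3) ≤ arg(v'_4) = π, and (2) V' is (2,γ)-far for some 0 < γ ≤ π/2. Then Σ_{i=1}^3 ‖v'_i − v'_{i+1}‖² ≤ 4 − 8 sin³(γ/2). -/
/-!
Write `θᵢ = arg2 (V i)`, so that `V i = (cos θᵢ, sin θᵢ)`, and let `a, b, c` be the three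
consecutive gaps `θᵢ₊₁ - θᵢ`; they are nonnegative with sum `π`. Each squared distance is
`2 - 2 cos` of a gap, and for `a + b + c = π` one has
`cos a + cos b + cos c = 1 + 4 sin (a/2) sin (b/2) sin (c/2)` (`cos_add_cos_add_cos_of_sum_pi`),
so the sum of squares equals `4 - 8 sin (a/2) sin (b/2) sin (c/2)`.

Each gap exceeds `γ`: since `V 3 = -V 0`, the four vectors span at most three lines, and if one
gap were at most `γ`, two suitably chosen members of `V` would witness `(2,γ)`-closeness.
Monotonicity of `sin` on `[0, π/2]` finishes the proof.
-/

open Real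

/-- The argument `θ ∈ [0, 2π)` of a (unit) vector `v ∈ ℝ²`, so that
`v = (cos θ, sin θ)`. -/
noncomputable def arg2 (v : EuclideanSpace ℝ (Fin 2)) : ℝ :=
  if 0 ≤ v 1 then Real.arccos (v 0) else 2 * Real.pi - Real.arccos (v 0)

/-- Two unit vectors `v, x ∈ ℝ²` are `γ`-close if the angle between `v` and `x`, or the
angle between `−v` and `x`, is at most `γ` radians. -/
def gClose (γ : ℝ) (v x : EuclideanSpace ℝ (Fin 2)) : Prop :=
  InnerProductGeometry.angle v x ≤ γ ∨ InnerProductGeometry.angle (-v) x ≤ γ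

/-- A sequence `V` of unit vectors in `ℝ²` is `(2,γ)`-close if there exist two unit vectors
`x₁, x₂` such that every `vᵢ` is `γ`-close to either `x₁` or `x₂`; it is `(2,γ)`-far
otherwise. -/
def twoClose {n : ℕ} (γ : ℝ) (V : Fin n → EuclideanSpace ℝ (Fin 2)) : Prop :=
  ∃ x₁ x₂ : EuclideanSpace ℝ (Fin 2), ‖x₁‖ = 1 ∧ ‖x₂‖ = 1 ∧
    ∀ i, gClose γ (V i) x₁ ∨ gClose γ (V i) x₂

theorem coords_of_arg2 (v : EuclideanSpace ℝ (Fin 2)) (hv : ‖v‖ = 1) :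
    v 0 = cos (arg2 v) ∧ v 1 = sin (arg2 v) := by
  have h : v 0 ^ 2 + v 1 ^ 2 = 1 := by
    have := EuclideanSpace.real_norm_sq_eq v
    rw [hv, Fin.sum_univ_two] at this
    linarith
  have h1 : -1 ≤ v 0 := by nlinarith [sq_nonneg (v 1)]
  have h2 : v 0 ≤ 1 := by nlinarith [sq_nonneg (v 1)]
  have h3 : 1 - v 0 ^ 2 = v 1 ^ 2 := by linarith
  unfold arg2
  split_ifs with h0
  · rw [cos_arccos h1 h2, sin_arccos, h3, sqrt_sq h0]
    exact ⟨rfl, rfl⟩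
  · rw [cos_two_pi_sub, sin_two_pi_sub, cos_arccos h1 h2, sin_arccos, h3, sqrt_sq_eq_abs,
      abs_of_neg (not_le.mp h0)]
    exact ⟨rfl, by ring⟩

theorem inner_eq_cos_arg2_sub (v w : EuclideanSpace ℝ (Fin 2)) (hv : ‖v‖ = 1) (hw : ‖w‖ = 1) :
    inner ℝ v w = cos (arg2 w - arg2 v) := by
  obtain ⟨a, b⟩ := coords_of_arg2 v hv
  obtain ⟨c, d⟩ := coords_of_arg2 w hw
  rw [PiLp.inner_apply, Fin.sum_univ_two, a, b, c, d, cos_sub]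
  simp

theorem angle_eq_arg2_sub (v w : EuclideanSpace ℝ (Fin 2)) (hv : ‖v‖ = 1) (hw : ‖w‖ = 1)
    (h0 : arg2 v ≤ arg2 w) (h1 : arg2 w - arg2 v ≤ π) :
    InnerProductGeometry.angle v w = arg2 w - arg2 v := by
  rw [InnerProductGeometry.angle, inner_eq_cos_arg2_sub v w hv hw, hv, hw, mul_one, div_one,
    arccos_cos (by linarith) h1]

theorem norm_sub_sq_eq_cos_arg2_sub (v w : EuclideanSpace ℝ (Fin 2)) (hv : ‖v‖ = 1)
    (hw : ‖w‖ = 1) : ‖v - w‖ ^ 2 = 2 - 2 * cos (arg2 w - arg2 v) := by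
  rw [norm_sub_sq_real, inner_eq_cos_arg2_sub v w hv hw, hv, hw]
  ring

theorem cos_add_cos_add_cos_of_sum_pi (a b c : ℝ) (h : a + b + c = π) :
    cos a + cos b + cos c = 1 + 4 * (sin (a / 2) * sin (b / 2) * sin (c / 2)) := by
  have hs : sin (c / 2) = cos (a / 2) * cos (b / 2) - sin (a / 2) * sin (b / 2) := by
    rw [← cos_add, ← cos_pi_div_two_sub]
    congr 1
    linarith
  have hh (x : ℝ) : cos x = 1 - 2 * sin (x / 2) ^ 2 := by
    have h1 := cos_two_mul (x / 2)
    have h2 := sin_sq_add_cos_sq (x / 2)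
    rw [mul_div_cancel₀ x two_ne_zero] at h1
    linarith
  rw [hh a, hh b, hh c, hs]
  have h1 := sin_sq_add_cos_sq (a / 2)
  have h2 := sin_sq_add_cos_sq (b / 2)
  generalize sin (a / 2) = p at *
  generalize sin (b / 2) = q at *
  generalize cos (a / 2) = r at *
  generalize cos (b / 2) = s at *
  have h3 : r ^ 2 = 1 - p ^ 2 := by linarith
  have h4 : s ^ 2 = 1 - q ^ 2 := by linarith
  linear_combination (-2 * s ^ 2) * h3 + (-2 * (1 - p ^ 2)) * h4

/-- Lemma 3.7: let `V' = (v'₁, v'₂, v'₃, v'₄)` be unit vectors in `ℝ²` with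
`0 = arg(v'₁) ≤ arg(v'₂) ≤ arg(v'₃) ≤ arg(v'₄) = π` which is `(2,γ)`-far for some
`0 < γ ≤ π/2`.  Then `Σ_{i=1}^3 ‖v'ᵢ − v'_{i+1}‖² ≤ 4 − 8 sin³(γ/2)`. -/
theorem stmt_13 (γ : ℝ) (hγ0 : 0 < γ) (hγ : γ ≤ π / 2)
    (V : Fin 4 → EuclideanSpace ℝ (Fin 2))
    (hunit : ∀ i, ‖V i‖ = 1)
    (harg0 : arg2 (V 0) = 0)
    (hmono : Monotone fun i => arg2 (V i))
    (hargl : arg2 (V 3) = π)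
    (hfar : ¬ twoClose γ V) :
    ∑ i : Fin 3, ‖V i.castSucc - V i.succ‖ ^ 2 ≤ 4 - 8 * Real.sin (γ / 2) ^ 3 := by
  have hr (i : Fin 4) : InnerProductGeometry.angle (V i) (V i) ≤ γ := by
    rw [InnerProductGeometry.angle_self (by
      intro h
      have := hunit i
      simp [h] at this)]
    exact hγ0.le
  have hneg : -V 3 = V 0 := by
    obtain ⟨a, b⟩ := coords_of_arg2 _ (hunit 0)
    obtain ⟨c, d⟩ := coords_of_arg2 _ (hunit 3)
    rw [harg0] at a b
    rw [hargl] at c d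
    ext i
    fin_cases i <;> simp [a, b, c, d]
  have hneg' : -V 0 = V 3 := by rw [← hneg, neg_neg]
  have m01 : arg2 (V 0) ≤ arg2 (V 1) := hmono (by decide)
  have m12 : arg2 (V 1) ≤ arg2 (V 2) := hmono (by decide)
  have m23 : arg2 (V 2) ≤ arg2 (V 3) := hmono (by decide)
  have g01 : γ < arg2 (V 1) - arg2 (V 0) := by
    by_contra! hc
    rw [← angle_eq_arg2_sub _ _ (hunit 0) (hunit 1) m01 (by linarith)] at hc
    refine hfar ⟨V 1, V 2, hunit 1, hunit 2, fun i => ?_⟩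
    fin_cases i
    · exact .inl (.inl hc)
    · exact .inl (.inl (hr 1))
    · exact .inr (.inl (hr 2))
    · refine .inl (.inr ?_)
      change InnerProductGeometry.angle (-V 3) (V 1) ≤ γ
      rwa [hneg]
  have g12 : γ < arg2 (V 2) - arg2 (V 1) := by
    by_contra! hc
    rw [← angle_eq_arg2_sub _ _ (hunit 1) (hunit 2) m12 (by linarith)] at hc
    refine hfar ⟨V 2, V 0, hunit 2, hunit 0, fun i => ?_⟩
    fin_cases i
    · exact .inr (.inl (hr 0))
    · exact .inl (.inl hc)
    · exact .inl (.inl (hr 2))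
    · refine .inr (.inr ?_)
      change InnerProductGeometry.angle (-V 3) (V 0) ≤ γ
      rw [hneg]
      exact hr 0
  have g23 : γ < arg2 (V 3) - arg2 (V 2) := by
    by_contra! hc
    rw [← angle_eq_arg2_sub _ _ (hunit 2) (hunit 3) m23 (by linarith)] at hc
    refine hfar ⟨V 3, V 1, hunit 3, hunit 1, fun i => ?_⟩
    fin_cases i
    · refine .inl (.inr ?_)
      change InnerProductGeometry.angle (-V 0) (V 3) ≤ γ
      rw [hneg']
      exact hr 3
    · exact .inr (.inl (hr 1))
    · exact .inl (.inl hc)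
    · exact .inl (.inl (hr 3))
  have hsum : ∑ i : Fin 3, ‖V i.castSucc - V i.succ‖ ^ 2
      = ‖V 0 - V 1‖ ^ 2 + ‖V 1 - V 2‖ ^ 2 + ‖V 2 - V 3‖ ^ 2 := by
    rw [Fin.sum_univ_three]
    rfl
  have hcos := cos_add_cos_add_cos_of_sum_pi (arg2 (V 1) - arg2 (V 0)) (arg2 (V 2) - arg2 (V 1))
    (arg2 (V 3) - arg2 (V 2)) (by linarith)
  rw [hsum, norm_sub_sq_eq_cos_arg2_sub _ _ (hunit 0) (hunit 1),
    norm_sub_sq_eq_cos_arg2_sub _ _ (hunit 1) (hunit 2),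
    norm_sub_sq_eq_cos_arg2_sub _ _ (hunit 2) (hunit 3)]
  have hs0 : 0 ≤ sin (γ / 2) := sin_nonneg_of_nonneg_of_le_pi (by linarith) (by linarith)
  have hs (x : ℝ) (h1 : γ < x) (h2 : x ≤ π) : sin (γ / 2) ≤ sin (x / 2) :=
    sin_le_sin_of_le_of_le_pi_div_two (by linarith) (by linarith) (by linarith)
  have s1 := hs _ g01 (by linarith)
  have s2 := hs _ g12 (by linarith)
  have s3 := hs _ g23 (by linarith)
  have hprod := mul_le_mul (mul_le_mul s1 s2 hs0 (hs0.trans s1)) s3 hs0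
    (mul_nonneg (hs0.trans s1) (hs0.trans s2))
  nlinarith [hprod, hcos]
end

section
/- There exists an absolute constant c > 0 such that the following holds. Let V = (v_1, …, v_n) be a sequence of unit vectors in ℝ² with n even and let 0 < γ ≤ arcsin(0.1). If there exist unit vectors x_1, x_2 and an even integer m with 0 ≤ m ≤ n such that every v_i with i ≤ m is γ-close to x_1 and every v_i with i > m is γ-close to x_2, then Pr[‖σ_V‖ ≤ 1/2] ≥ c/n. -/
/-!
The vectors are paired so that the two members of a pair are nearly equal, and the signed sum is
compared with a difference of two independent copies of one random sum.

After flipping signs, each vector `w` of a group lies in a small cone around the axis `x` of the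
group. Sorting a group by the component of `w` orthogonal to `x` and pairing consecutive vectors
(`exists_pairing`), the differences `‖a_j - b_j‖` over the pairs of the group telescope
to at most `0.222`, because the orthogonal component ranges over an interval of length `0.2` and
`w` is a Lipschitz function of it (`norm_sub_le_of_cone`). Over both groups the differences add up
to at most `0.444`.

Writing the signs of a pair as `δ_j` and `-δ'_j`, the signed sum becomes
`∑ δ_j a_j - ∑ δ'_j a_j + ∑ δ'_j (a_j - b_j)`. The last term has norm at most `0.444` for every
choice of signs. The random vector `∑ δ_j a_j` has second moment equal to the number `M` of pairs
(`sum_norm_sq_signedSum`), so with probability at least `1/2` it lies in a disc of radius `√(2M)`,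
which meets `O(M)` square cells of side `1/40`; by Cauchy–Schwarz two independent copies fall into
a common cell with probability at least a constant over `M` (`card_near_pairs`), and then
they differ by at most `1/20`.
-/

/-- The real sign `+1` or `-1` associated to a Boolean. -/
noncomputable def rsign (b : Bool) : ℝ := if b then 1 else -1

/-- The signed sum `ε₁ v₁ + ⋯ + εₙ vₙ` determined by a vector of Booleans. -/
noncomputable def signedSum {d n : ℕ} (V : Fin n → EuclideanSpace ℝ (Fin d))
    (ε : Fin n → Bool) : EuclideanSpace ℝ (Fin d) :=
  ∑ i, rsign (ε i) • V i

/-- `probLe V r` is the probability, over independent uniform signs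
`ε ∈ {−1,+1}ⁿ`, that `‖ε₁ v₁ + ⋯ + εₙ vₙ‖ ≤ r`. -/
noncomputable def probLe {d n : ℕ} (V : Fin n → EuclideanSpace ℝ (Fin d)) (r : ℝ) : ℝ :=
  (Nat.card {ε : Fin n → Bool // ‖signedSum V ε‖ ≤ r} : ℝ) / 2 ^ n

/-! ### Second moment and collisions -/

theorem abs_rsign (b : Bool) : |rsign b| = 1 := by
  cases b <;> simp [rsign]

theorem sum_norm_sq_signedSum (M : ℕ) (a : Fin M → EuclideanSpace ℝ (Fin 2)) :
    ∑ ε : Fin M → Bool, ‖signedSum a ε‖ ^ 2 = 2 ^ M * ∑ i, ‖a i‖ ^ 2 := by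
  induction M with
  | zero => simp [signedSum]
  | succ M ih =>
    rw [← (Fin.consEquiv (fun _ : Fin (M + 1) => Bool)).sum_comp, Fintype.sum_prod_type_right]
    have h : ∀ y : Fin M → Bool,
        ∑ x : Bool, ‖signedSum a (Fin.consEquiv (fun _ : Fin (M + 1) => Bool) (x, y))‖ ^ 2
          = 2 * (‖a 0‖ ^ 2 + ‖signedSum (fun i => a i.succ) y‖ ^ 2) := by
      intro y
      have hs : ∀ x : Bool, signedSum a (Fin.consEquiv (fun _ : Fin (M + 1) => Bool) (x, y))
          = rsign x • a 0 + signedSum (fun i => a i.succ) y := by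
        intro x
        simp [signedSum, Fin.sum_univ_succ, Fin.consEquiv]
      have hp := parallelogram_law_with_norm ℝ (signedSum (fun i => a i.succ) y) (a 0)
      have e1 : -a 0 + signedSum (fun i => a i.succ) y
          = signedSum (fun i => a i.succ) y - a 0 := by abel
      have e2 : a 0 + signedSum (fun i => a i.succ) y
          = signedSum (fun i => a i.succ) y + a 0 := by abel
      simp only [Fintype.sum_bool, hs]
      simp only [rsign, if_true, one_smul, neg_smul, Bool.false_eq_true, if_false, e1, e2]
      linarith
    simp only [Fintype.sum_congr _ _ h]
    rw [← Finset.mul_sum, Finset.sum_add_distrib, ih, Fin.sum_univ_succ]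
    simp
    ring

/-- If `X` has second moment at most `M`, two independent copies of it are within `1/20` of each
other with probability at least `1 / (60516 M)`. -/
theorem card_near_pairs {Ω : Type*} [Fintype Ω] [DecidableEq Ω]
    (X : Ω → EuclideanSpace ℝ (Fin 2)) (M : ℕ) (hM : 1 ≤ M)
    (hX : ∑ ω, ‖X ω‖ ^ 2 ≤ Fintype.card Ω * M) :
    (Fintype.card Ω : ℝ) ^ 2 ≤
      60516 * M * ((Finset.univ.filter
        (fun p : Ω × Ω => ‖X p.1 - X p.2‖ ≤ 1 / 20)).card : ℝ) := by
  have hM' : (1 : ℝ) ≤ M := by exact_mod_cast hM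
  set G : Finset Ω := Finset.univ.filter (fun ω => ‖X ω‖ ^ 2 ≤ 2 * M) with hG
  -- Markov's inequality
  have hGcard : (Fintype.card Ω : ℝ) ≤ 2 * G.card := by
    have h1 : ((Finset.univ.filter (fun ω => ¬ ‖X ω‖ ^ 2 ≤ 2 * M)).card : ℝ) * (2 * M)
        ≤ ∑ ω, ‖X ω‖ ^ 2 := by
      rw [← nsmul_eq_mul]
      refine (Finset.card_nsmul_le_sum _ (fun ω => ‖X ω‖ ^ 2) _ ?_).trans
        (Finset.sum_le_sum_of_subset_of_nonneg (Finset.filter_subset _ _) ?_)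
      · intro ω hω
        exact (not_le.mp (Finset.mem_filter.mp hω).2).le
      · intros
        positivity
    have h2 : (G.card : ℝ) + ((Finset.univ.filter (fun ω => ¬ ‖X ω‖ ^ 2 ≤ 2 * M)).card : ℝ)
        = Fintype.card Ω := by
      have := Finset.card_filter_add_card_filter_not (s := (Finset.univ : Finset Ω))
        (fun ω => ‖X ω‖ ^ 2 ≤ 2 * M)
      rw [Finset.card_univ] at this
      have := congrArg (Nat.cast : ℕ → ℝ) this
      rwa [Nat.cast_add] at this
    nlinarith
  set K : ℤ := ⌈60 * √(M : ℝ)⌉ with hK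
  have hsq : √(M : ℝ) ^ 2 = M := Real.sq_sqrt (by positivity)
  have hs1 : 1 ≤ √(M : ℝ) := Real.one_le_sqrt.mpr hM'
  have hK0 : 0 ≤ K := Int.ceil_nonneg (by positivity)
  have hK1 : (K : ℝ) ≤ 60 * √(M : ℝ) + 1 := (Int.ceil_lt_add_one _).le
  have hK2 : 60 * √(M : ℝ) ≤ K := Int.le_ceil _
  set cell : Ω → ℤ × ℤ := fun ω => (⌊40 * X ω 0⌋, ⌊40 * X ω 1⌋) with hcell
  set T : Finset (ℤ × ℤ) := Finset.Icc (-K) K ×ˢ Finset.Icc (-K) K with hT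
  have hTcard : (T.card : ℝ) ≤ 15129 * M := by
    have hI : ((Finset.Icc (-K) K).card : ℝ) = 2 * K + 1 := by
      rw [Int.card_Icc]
      have : ((K + 1 - -K).toNat : ℤ) = 2 * K + 1 := by
        rw [Int.toNat_of_nonneg (by linarith)]
        ring
      exact_mod_cast this
    rw [hT, Finset.card_product, Nat.cast_mul, hI]
    have hK0' : (0 : ℝ) ≤ K := by exact_mod_cast hK0
    nlinarith
  have hfl : ∀ y : ℝ, y ^ 2 ≤ 2 * M → ⌊40 * y⌋ ∈ Finset.Icc (-K) K := by
    intro y hy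
    have hy' : |40 * y| ≤ 60 * √(M : ℝ) := by
      apply abs_le_of_sq_le_sq _ (by positivity)
      rw [mul_pow, mul_pow, hsq]
      nlinarith
    obtain ⟨h1, h2⟩ := abs_le.mp hy'
    rw [Finset.mem_Icc]
    constructor
    · rw [Int.le_floor]
      push_cast
      linarith
    · have : ((⌊40 * y⌋ : ℤ) : ℝ) ≤ K := (Int.floor_le _).trans (h2.trans hK2)
      exact_mod_cast this
  have hmaps : ∀ ω ∈ G, cell ω ∈ T := by
    intro ω hω
    have h := (Finset.mem_filter.mp hω).2
    rw [EuclideanSpace.norm_sq_eq, Fin.sum_univ_two] at h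
    simp only [Real.norm_eq_abs, sq_abs] at h
    exact Finset.mem_product.mpr ⟨hfl _ (by nlinarith), hfl _ (by nlinarith)⟩
  set P := Finset.univ.filter (fun p : Ω × Ω => ‖X p.1 - X p.2‖ ≤ 1 / 20) with hP
  have hdist : ∀ ω ω', cell ω = cell ω' → ‖X ω - X ω'‖ ≤ 1 / 20 := by
    intro ω ω' h
    have h0 := Int.abs_sub_lt_one_of_floor_eq_floor (congrArg Prod.fst h)
    have h1 := Int.abs_sub_lt_one_of_floor_eq_floor (congrArg Prod.snd h)
    apply le_of_sq_le_sq _ (by norm_num)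
    rw [EuclideanSpace.norm_sq_eq, Fin.sum_univ_two]
    simp only [Real.norm_eq_abs, sq_abs, PiLp.sub_apply]
    rw [abs_lt] at h0 h1
    nlinarith
  have hfib : ∑ c ∈ T, ((G.filter (fun ω => cell ω = c)).card : ℝ) ^ 2 ≤ P.card := by
    have hle : ∑ c ∈ T, (G.filter (fun ω => cell ω = c)).card ^ 2 ≤ P.card := by
      calc ∑ c ∈ T, (G.filter (fun ω => cell ω = c)).card ^ 2
          ≤ ∑ c ∈ T, (P.filter (fun p => cell p.1 = c)).card := by
            refine Finset.sum_le_sum fun c _ => ?_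
            rw [sq, ← Finset.card_product]
            apply Finset.card_le_card
            intro p hp
            obtain ⟨h1, h2⟩ := Finset.mem_product.mp hp
            have h1 := (Finset.mem_filter.mp h1).2
            have h2 := (Finset.mem_filter.mp h2).2
            simp only [hP, Finset.mem_filter, Finset.mem_univ, true_and]
            exact ⟨hdist _ _ (h1.trans h2.symm), h1⟩
        _ ≤ P.card := by
            rw [Finset.sum_card_fiberwise_eq_card_filter]
            exact Finset.card_filter_le _ _
    exact_mod_cast hle
  have hGsum : (G.card : ℝ) = ∑ c ∈ T, ((G.filter (fun ω => cell ω = c)).card : ℝ) := by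
    exact_mod_cast Finset.card_eq_sum_card_fiberwise hmaps
  have hCS := sq_sum_le_card_mul_sum_sq (s := T)
    (f := fun c => ((G.filter (fun ω => cell ω = c)).card : ℝ))
  rw [← hGsum] at hCS
  have h3 : (G.card : ℝ) ^ 2 ≤ 15129 * M * P.card :=
    hCS.trans (mul_le_mul hTcard hfib (Finset.sum_nonneg fun _ _ => sq_nonneg _)
      (mul_nonneg (by norm_num) (Nat.cast_nonneg M)))
  have h4 : (Fintype.card Ω : ℝ) ^ 2 ≤ (2 * G.card) ^ 2 :=
    pow_le_pow_left₀ (Nat.cast_nonneg _) hGcard 2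
  linarith

/-! ### Pairing nearly equal vectors -/

/-- Sorting by `t` and pairing consecutive elements: the gaps inside the pairs are
non-overlapping subintervals of `[a, b]`. -/
theorem exists_pairing {α : Type*} [Fintype α] (m : ℕ) (hc : Fintype.card α = m * 2)
    (t : α → ℝ) (a b : ℝ) (hab : a ≤ b) (ha : ∀ i, a ≤ t i) (hb : ∀ i, t i ≤ b) :
    ∃ e : Fin m × Fin 2 ≃ α, ∑ j, |t (e (j, 0)) - t (e (j, 1))| ≤ b - a := by
  let e₀ : Fin (m * 2) ≃ α := (Fintype.equivFinOfCardEq hc).symm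
  let τ := Tuple.sort (t ∘ e₀)
  have hmono : Monotone ((t ∘ e₀) ∘ τ) := Tuple.monotone_sort _
  set h : Fin (m * 2) → ℝ := (t ∘ e₀) ∘ τ with hh
  -- The extension of `h` by `b` keeps monotonicity and lets the sum telescope over `ℕ`.
  set H : ℕ → ℝ := fun n => if hn : n < m * 2 then h ⟨n, hn⟩ else b with hH
  have hHb : ∀ n, H n ≤ b := by
    intro n
    simp only [hH]
    split_ifs
    · exact hb _
    · exact le_rfl
  have hHa : ∀ n, a ≤ H n := by
    intro n
    simp only [hH]
    split_ifs
    · exact ha _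
    · exact hab
  have hHm : Monotone H := by
    intro p q hpq
    by_cases hq : q < m * 2
    · have hp : p < m * 2 := lt_of_le_of_lt hpq hq
      simp only [hH, hp, hq, dif_pos]
      exact hmono hpq
    · have : H q = b := by simp only [hH, hq, dif_neg, not_false_eq_true]
      rw [this]
      exact hHb p
  refine ⟨finProdFinEquiv.trans (τ.trans e₀), ?_⟩
  have hterm : ∀ j : Fin m, |t ((finProdFinEquiv.trans (τ.trans e₀)) (j, 0)) -
      t ((finProdFinEquiv.trans (τ.trans e₀)) (j, 1))| ≤ H (2 * (j.1 + 1)) - H (2 * j.1) := by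
    intro j
    have hj := j.2
    have e0 : t ((finProdFinEquiv.trans (τ.trans e₀)) (j, 0)) = H (2 * j.1) := by
      have hlt : 2 * j.1 < m * 2 := by omega
      simp only [hH, hlt, dif_pos, hh, Function.comp, Equiv.trans_apply]
      congr 3
      ext
      simp [finProdFinEquiv]
    have e1 : t ((finProdFinEquiv.trans (τ.trans e₀)) (j, 1)) = H (2 * j.1 + 1) := by
      have hlt : 2 * j.1 + 1 < m * 2 := by omega
      simp only [hH, hlt, dif_pos, hh, Function.comp, Equiv.trans_apply]
      congr 3
      ext
      simp [finProdFinEquiv, add_comm]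
    rw [e0, e1]
    have h1 : H (2 * j.1) ≤ H (2 * j.1 + 1) := hHm (by omega)
    have h2 : H (2 * j.1 + 1) ≤ H (2 * (j.1 + 1)) := hHm (by omega)
    rw [abs_sub_comm, abs_of_nonneg (by linarith)]
    linarith
  refine (Finset.sum_le_sum fun j _ => hterm j).trans ?_
  rw [Fin.sum_univ_eq_sum_range (fun n => H (2 * (n + 1)) - H (2 * n)) m,
    Finset.sum_range_sub (fun n => H (2 * n))]
  linarith [hHb (2 * m), hHa (2 * 0)]

/-- A vector of the plane lies in the narrow cone around `x` when, in the orthonormal frame given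
by `x` and its rotation by a right angle, its first coordinate is at least `0.9` and its second
one is at most `0.1` in absolute value. -/
def InCone (x w : EuclideanSpace ℝ (Fin 2)) : Prop :=
  9 / 10 ≤ w 0 * x 0 + w 1 * x 1 ∧ |w 1 * x 0 - w 0 * x 1| ≤ 1 / 10

theorem coord_sq_add_sq {x : EuclideanSpace ℝ (Fin 2)} (hx : ‖x‖ = 1) :
    x 0 ^ 2 + x 1 ^ 2 = 1 := by
  have h := EuclideanSpace.norm_sq_eq x
  rw [hx, Fin.sum_univ_two] at h
  simp only [Real.norm_eq_abs, sq_abs] at h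
  linarith

theorem inCone_of_angle_le {γ : ℝ} (hγ : γ ≤ Real.arcsin 0.1)
    {w x : EuclideanSpace ℝ (Fin 2)} (hw : ‖w‖ = 1) (hx : ‖x‖ = 1)
    (h : InnerProductGeometry.angle w x ≤ γ) : InCone x w := by
  have hc : Real.cos (InnerProductGeometry.angle w x) = w 0 * x 0 + w 1 * x 1 := by
    rw [InnerProductGeometry.cos_angle, hw, hx]
    simp [PiLp.inner_apply, Fin.sum_univ_two]
    ring
  have h1 : Real.cos (Real.arcsin 0.1) ≤ w 0 * x 0 + w 1 * x 1 := by
    rw [← hc]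
    apply Real.cos_le_cos_of_nonneg_of_le_pi (InnerProductGeometry.angle_nonneg _ _) _
      (h.trans hγ)
    linarith [Real.arcsin_le_pi_div_two 0.1, Real.pi_pos]
  rw [Real.cos_arcsin] at h1
  have hs := Real.sq_sqrt (show (0 : ℝ) ≤ 1 - 0.1 ^ 2 by norm_num)
  have hs0 := Real.sqrt_nonneg (1 - 0.1 ^ 2 : ℝ)
  have h2 : (1 - 0.1 ^ 2 : ℝ) ≤ (w 0 * x 0 + w 1 * x 1) ^ 2 := by
    rw [← hs]
    exact pow_le_pow_left₀ hs0 h1 2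
  have hw' := coord_sq_add_sq hw
  have hx' := coord_sq_add_sq hx
  have hid : (w 0 * x 0 + w 1 * x 1) ^ 2 + (w 1 * x 0 - w 0 * x 1) ^ 2 = 1 := by
    linear_combination (x 0 ^ 2 + x 1 ^ 2) * hw' + hx'
  constructor
  · have : (9 / 10 : ℝ) ≤ √(1 - 0.1 ^ 2) := Real.le_sqrt_of_sq_le (by norm_num)
    linarith
  · apply abs_le_of_sq_le_sq _ (by norm_num)
    linarith

theorem exists_sign_inCone {γ : ℝ} (hγ : γ ≤ Real.arcsin 0.1)
    {v x : EuclideanSpace ℝ (Fin 2)} (hv : ‖v‖ = 1) (hx : ‖x‖ = 1) (h : gClose γ v x) :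
    ∃ s : Bool, InCone x (rsign s • v) := by
  rcases h with h | h
  · exact ⟨true, by simpa [rsign] using inCone_of_angle_le hγ hv hx h⟩
  · refine ⟨false, ?_⟩
    have := inCone_of_angle_le hγ (by rwa [norm_neg]) hx h
    simpa only [rsign, Bool.false_eq_true, if_false, neg_smul, one_smul] using this

/-- On the unit circle within the cone, a vector is a Lipschitz function of its component
orthogonal to the axis. -/
theorem norm_sub_le_of_cone {x w w' : EuclideanSpace ℝ (Fin 2)} (hx : ‖x‖ = 1) (hw : ‖w‖ = 1)
    (hw' : ‖w'‖ = 1) (h : InCone x w) (h' : InCone x w') :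
    ‖w - w'‖ ≤
      111 / 100 * |(w 1 * x 0 - w 0 * x 1) - (w' 1 * x 0 - w' 0 * x 1)| := by
  obtain ⟨hc, ht⟩ := h
  obtain ⟨hc', ht'⟩ := h'
  have ex := coord_sq_add_sq hx
  have ew := coord_sq_add_sq hw
  have ew' := coord_sq_add_sq hw'
  have hid : (w 0 * x 0 + w 1 * x 1) ^ 2 + (w 1 * x 0 - w 0 * x 1) ^ 2 = 1 := by
    linear_combination (x 0 ^ 2 + x 1 ^ 2) * ew + ex
  have hid' : (w' 0 * x 0 + w' 1 * x 1) ^ 2 + (w' 1 * x 0 - w' 0 * x 1) ^ 2 = 1 := by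
    linear_combination (x 0 ^ 2 + x 1 ^ 2) * ew' + ex
  have hn : ‖w - w'‖ ^ 2 = ((w 0 * x 0 + w 1 * x 1) - (w' 0 * x 0 + w' 1 * x 1)) ^ 2
      + ((w 1 * x 0 - w 0 * x 1) - (w' 1 * x 0 - w' 0 * x 1)) ^ 2 := by
    rw [EuclideanSpace.norm_sq_eq, Fin.sum_univ_two]
    simp only [Real.norm_eq_abs, sq_abs, PiLp.sub_apply]
    linear_combination (-((w 0 - w' 0) ^ 2 + (w 1 - w' 1) ^ 2)) * ex
  generalize w 0 * x 0 + w 1 * x 1 = c at *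
  generalize w' 0 * x 0 + w' 1 * x 1 = c' at *
  generalize w 1 * x 0 - w 0 * x 1 = t at *
  generalize w' 1 * x 0 - w' 0 * x 1 = t' at *
  apply le_of_sq_le_sq _ (by positivity)
  rw [hn, mul_pow, sq_abs]
  -- From `c² + t² = c'² + t'²`.
  have hprod : (c - c') ^ 2 * (c + c') ^ 2 = (t - t') ^ 2 * (t + t') ^ 2 := by
    have : (c - c') * (c + c') = -((t - t') * (t + t')) := by linear_combination hid - hid'
    rw [← mul_pow, ← mul_pow, this, neg_sq]
  have h1 : (9 / 5 : ℝ) ^ 2 ≤ (c + c') ^ 2 :=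
    pow_le_pow_left₀ (by norm_num) (by linarith) 2
  rw [abs_le] at ht ht'
  have h2 : (t + t') ^ 2 ≤ (1 / 5) ^ 2 :=
    sq_le_sq' (by linarith) (by linarith)
  have h3 : (c - c') ^ 2 * (9 / 5) ^ 2 ≤ (t - t') ^ 2 * (1 / 5) ^ 2 := by
    calc (c - c') ^ 2 * (9 / 5) ^ 2 ≤ (c - c') ^ 2 * (c + c') ^ 2 := by gcongr
      _ = (t - t') ^ 2 * (t + t') ^ 2 := hprod
      _ ≤ _ := by gcongr
  nlinarith [sq_nonneg (t - t')]

/-- Within one group, the vectors can be paired at total cost `0.222`. -/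
theorem exists_pairing_vectors {α : Type*} [Fintype α] (m : ℕ) (hc : Fintype.card α = m * 2)
    {x : EuclideanSpace ℝ (Fin 2)} (hx : ‖x‖ = 1) (w : α → EuclideanSpace ℝ (Fin 2))
    (hw : ∀ i, ‖w i‖ = 1) (hcone : ∀ i, InCone x (w i)) :
    ∃ e : Fin m × Fin 2 ≃ α, ∑ j, ‖w (e (j, 0)) - w (e (j, 1))‖ ≤ 222 / 1000 := by
  obtain ⟨e, he⟩ := exists_pairing m hc (fun i => w i 1 * x 0 - w i 0 * x 1) (-(1 / 10)) (1 / 10)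
    (by norm_num) (fun i => (abs_le.mp (hcone i).2).1) (fun i => (abs_le.mp (hcone i).2).2)
  refine ⟨e, ?_⟩
  refine (Finset.sum_le_sum fun j _ =>
    norm_sub_le_of_cone hx (hw _) (hw _) (hcone _) (hcone _)).trans ?_
  rw [← Finset.mul_sum]
  linarith

/-! ### Signed sums of paired vectors -/

theorem rsign_beq (b s : Bool) : rsign (b == s) = rsign b * rsign s := by
  cases b <;> cases s <;> simp [rsign]

theorem rsign_not (b : Bool) : rsign (!b) = -rsign b := by
  cases b <;> simp [rsign]

/-- The small-ball bound for unit vectors which, up to the signs `s`, are paired by `e` at total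
cost `0.444`. -/
theorem probLe_of_pairing {M : ℕ} (hM : 1 ≤ M) (V : Fin (2 * M) → EuclideanSpace ℝ (Fin 2))
    (hV : ∀ i, ‖V i‖ = 1) (s : Fin (2 * M) → Bool) (e : Fin M × Fin 2 ≃ Fin (2 * M))
    (he : ∑ j, ‖rsign (s (e (j, 0))) • V (e (j, 0)) - rsign (s (e (j, 1))) • V (e (j, 1))‖
      ≤ 444 / 1000) :
    (1 / 60516) / M ≤ probLe V (1 / 2) := by
  classical
  set a : Fin M → EuclideanSpace ℝ (Fin 2) := fun j => rsign (s (e (j, 0))) • V (e (j, 0)) with ha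
  set b : Fin M → EuclideanSpace ℝ (Fin 2) := fun j => rsign (s (e (j, 1))) • V (e (j, 1)) with hb
  have hnorm : ∀ j, ‖a j‖ = 1 := by
    intro j
    simp [ha, norm_smul, abs_rsign, hV]
  have hMpos : (0 : ℝ) < M := by exact_mod_cast hM
  have hcol := card_near_pairs (fun δ : Fin M → Bool => signedSum a δ) M hM (by
    rw [sum_norm_sq_signedSum]
    simp [hnorm])
  -- The sign of the first member of a pair is read off `δ`, that of the second one off `-δ'`.
  let F : (Fin M → Bool) × (Fin M → Bool) → Fin (2 * M) → Bool := fun p i =>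
    if (e.symm i).2 = 0 then (p.1 (e.symm i).1 == s i) else ((!p.2 (e.symm i).1) == s i)
  have hF0 : ∀ p j, F p (e (j, 0)) = (p.1 j == s (e (j, 0))) := by
    intro p j
    simp [F]
  have hF1 : ∀ p j, F p (e (j, 1)) = ((!p.2 j) == s (e (j, 1))) := by
    intro p j
    simp [F]
  have hFinj : Function.Injective F := by
    intro p q hpq
    ext j
    · have h := congrFun hpq (e (j, 0))
      rw [hF0, hF0] at h
      revert h
      cases p.1 j <;> cases q.1 j <;> cases s (e (j, 0)) <;> simp
    · have h := congrFun hpq (e (j, 1))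
      rw [hF1, hF1] at h
      revert h
      cases p.2 j <;> cases q.2 j <;> cases s (e (j, 1)) <;> simp
  have hFsum : ∀ p, signedSum V (F p) =
      (signedSum a p.1 - signedSum a p.2) + ∑ j, rsign (p.2 j) • (a j - b j) := by
    intro p
    have : signedSum V (F p) = ∑ j, (rsign (p.1 j) • a j - rsign (p.2 j) • b j) := by
      unfold signedSum
      rw [← e.sum_comp, Fintype.sum_prod_type]
      refine Finset.sum_congr rfl fun j _ => ?_
      rw [Fin.sum_univ_two, hF0, hF1, rsign_beq, rsign_beq, rsign_not, mul_smul, mul_smul,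
        neg_smul, sub_eq_add_neg]
    rw [this]
    unfold signedSum
    rw [← Finset.sum_sub_distrib, ← Finset.sum_add_distrib]
    refine Finset.sum_congr rfl fun j _ => ?_
    rw [smul_sub]
    abel
  have hFle : ∀ p : (Fin M → Bool) × (Fin M → Bool), ‖signedSum a p.1 - signedSum a p.2‖ ≤ 1 / 20 →
      ‖signedSum V (F p)‖ ≤ 1 / 2 := by
    intro p hp
    rw [hFsum]
    have h2 : ‖∑ j, rsign (p.2 j) • (a j - b j)‖ ≤ 444 / 1000 := by
      refine (norm_sum_le _ _).trans (le_trans (le_of_eq ?_) he)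
      refine Finset.sum_congr rfl fun j _ => ?_
      rw [norm_smul, Real.norm_eq_abs, abs_rsign, one_mul]
    refine (norm_add_le _ _).trans ?_
    linarith
  have hcard : (Finset.univ.filter (fun p : (Fin M → Bool) × (Fin M → Bool) =>
        ‖signedSum a p.1 - signedSum a p.2‖ ≤ 1 / 20)).card
      ≤ Nat.card {ε : Fin (2 * M) → Bool // ‖signedSum V ε‖ ≤ 1 / 2} := by
    rw [Nat.card_eq_fintype_card, Fintype.card_subtype]
    refine Finset.card_le_card_of_injOn F ?_ hFinj.injOn
    intro p hp
    simp only [Finset.coe_filter, Finset.mem_univ, true_and, Set.mem_ofPred_eq] at hp ⊢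
    exact hFle p hp
  have hcard' : ((Finset.univ.filter (fun p : (Fin M → Bool) × (Fin M → Bool) =>
        ‖signedSum a p.1 - signedSum a p.2‖ ≤ 1 / 20)).card : ℝ)
      ≤ Nat.card {ε : Fin (2 * M) → Bool // ‖signedSum V ε‖ ≤ 1 / 2} := by
    exact_mod_cast hcard
  unfold probLe
  have hpow : (Fintype.card (Fin M → Bool) : ℝ) ^ 2 = 2 ^ (2 * M) := by
    simp
    rw [← pow_mul, mul_comm]
  rw [hpow] at hcol
  rw [div_le_div_iff₀ hMpos (by positivity)]
  nlinarith [mul_le_mul_of_nonneg_left hcard' hMpos.le]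

/-- Lemma 3.8: there is an absolute constant `c > 0` such that the following holds.  Let
`V = (v₁, …, vₙ)` be unit vectors in `ℝ²` with `n = 2M` even and `0 < γ ≤ arcsin(0.1)`.
If there are unit vectors `x₁, x₂` and an even `k` with `0 ≤ k ≤ n` such that every `vᵢ`
with `i ≤ k` is `γ`-close to `x₁` and every `vᵢ` with `i > k` is `γ`-close to `x₂`
(indices here are 0-based, so `i.1 < k` and `k ≤ i.1`), then
`Pr[‖σ_V‖ ≤ 1/2] ≥ c / n`. -/
theorem stmt_15 :
    ∃ c : ℝ, 0 < c ∧
      ∀ (M : ℕ) (γ : ℝ), 0 < γ → γ ≤ Real.arcsin 0.1 →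
        ∀ V : Fin (2 * M) → EuclideanSpace ℝ (Fin 2),
          (∀ i, ‖V i‖ = 1) →
          ∀ x₁ x₂ : EuclideanSpace ℝ (Fin 2), ‖x₁‖ = 1 → ‖x₂‖ = 1 →
            ∀ k : ℕ, Even k → k ≤ 2 * M →
              (∀ i : Fin (2 * M),
                (i.1 < k → gClose γ (V i) x₁) ∧ (k ≤ i.1 → gClose γ (V i) x₂)) →
              c / ((2 * M : ℕ) : ℝ) ≤ probLe V (1 / 2) := by
  refine ⟨1 / 30258, by norm_num, ?_⟩
  intro M γ _ hγ V hV x₁ x₂ hx₁ hx₂ k hk hkM hclose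
  rcases Nat.eq_zero_or_pos M with rfl | hM
  · simp only [mul_zero, Nat.cast_zero, div_zero]
    unfold probLe
    positivity
  have hs : ∀ i : Fin (2 * M), ∃ s : Bool,
      (i.1 < k → InCone x₁ (rsign s • V i)) ∧ (¬ i.1 < k → InCone x₂ (rsign s • V i)) := by
    intro i
    by_cases hi : i.1 < k
    · obtain ⟨s, h⟩ := exists_sign_inCone hγ (hV i) hx₁ ((hclose i).1 hi)
      exact ⟨s, fun _ => h, fun h' => absurd hi h'⟩
    · obtain ⟨s, h⟩ := exists_sign_inCone hγ (hV i) hx₂ ((hclose i).2 (not_lt.mp hi))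
      exact ⟨s, fun h' => absurd h' hi, fun _ => h⟩
  choose s hs₁ hs₂ using hs
  have hw : ∀ i, ‖rsign (s i) • V i‖ = 1 := by
    intro i
    rw [norm_smul, Real.norm_eq_abs, abs_rsign, hV, one_mul]
  obtain ⟨m₁, hm₁⟩ := hk
  have hc₁ : Fintype.card {i : Fin (2 * M) // i.1 < k} = m₁ * 2 := by
    rw [Fintype.card_subtype, Fin.card_filter_val_lt]
    omega
  have hc₂ : Fintype.card {i : Fin (2 * M) // ¬ i.1 < k} = (M - m₁) * 2 := by
    rw [Fintype.card_subtype_compl, hc₁, Fintype.card_fin]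
    omega
  obtain ⟨e₁, he₁⟩ := exists_pairing_vectors m₁ hc₁ hx₁
    (fun i => rsign (s i.1) • V i.1) (fun i => hw _) (fun i => hs₁ i.1 i.2)
  obtain ⟨e₂, he₂⟩ := exists_pairing_vectors (M - m₁) hc₂ hx₂
    (fun i => rsign (s i.1) • V i.1) (fun i => hw _) (fun i => hs₂ i.1 i.2)
  let f : Fin m₁ ⊕ Fin (M - m₁) ≃ Fin M :=
    finSumFinEquiv.trans (finCongr (by omega))
  let g : (Fin m₁ ⊕ Fin (M - m₁)) × Fin 2 ≃ Fin (2 * M) :=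
    (Equiv.sumProdDistrib _ _ _).trans
      ((Equiv.sumCongr e₁ e₂).trans (Equiv.sumCompl (fun i : Fin (2 * M) => i.1 < k)))
  have h := probLe_of_pairing hM V hV s ((Equiv.prodCongr f.symm (Equiv.refl _)).trans g) (by
    rw [← f.sum_comp, Fintype.sum_sum_type]
    simp only [Equiv.trans_apply, Equiv.prodCongr_apply, Prod.map, Equiv.symm_apply_apply,
      Equiv.refl_apply]
    have : (444 / 1000 : ℝ) = 222 / 1000 + 222 / 1000 := by norm_num
    rw [this]
    exact add_le_add he₁ he₂)
  refine le_trans (le_of_eq ?_) h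
  push_cast
  field_simp
  norm_num
end
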